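/- arXiv:1909.06193 — 2 statements merged into one kernel-verified Lean document; each statement's English description precedes it below -/
import Mathlib

section
/- (Corollary 5.) Let x_1,…,x_N be points in [0,1]^d with N ≥ 2, and let 1 ≤ n ≤ N. Let τ be a uniformly random n-element subset of {1,…,N}, μ_τ = (1/n) Σ_{j∈τ} δ_{x_j}, and μ = (1/N) Σ_{j=1}^N δ_{x_j}. Then E(W₁(μ_τ, μ)) ≤ √(2/n) if d = 1; E(W₁(μ_τ, μ)) ≤ 8·√((1 + log(2n))/n) if d = 2; and E(W₁(μ_τ, μ)) ≤ 13√d / n^{1/d} if d ≥ 3. -/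
open MeasureTheory Real ENNReal Finset

noncomputable section

/-- Euclidean distance on `Fin d → ℝ`. -/
def euclidDist {d : ℕ} (x y : Fin d → ℝ) : ℝ := Real.sqrt (∑ i, (x i - y i) ^ 2)

/-- `γ` is a coupling of `μ` and `ν`. -/
def IsCoupling {α : Type*} [MeasurableSpace α]
    (γ : Measure (α × α)) (μ ν : Measure α) : Prop :=
  γ.map Prod.fst = μ ∧ γ.map Prod.snd = ν

/-- Optimal transport cost for a cost function `c`. -/
def transportCost {α : Type*} [MeasurableSpace α] (c : α → α → ℝ)
    (μ ν : Measure α) : ℝ≥0∞ :=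
  ⨅ (γ : Measure (α × α)) (_ : IsCoupling γ μ ν),
    ∫⁻ p, ENNReal.ofReal (c p.1 p.2) ∂γ

/-- Euclidean Kantorovich distance `W₁`. -/
def W1 {d : ℕ} (μ ν : Measure (Fin d → ℝ)) : ℝ≥0∞ := transportCost euclidDist μ ν

/-- The collection `𝒢_n` of all `n`-element subsets of `{1,…,N}`. -/
def subsetsCard (N n : ℕ) : Finset (Finset (Fin N)) :=
  Finset.powersetCard n (Finset.univ : Finset (Fin N))

/-- The empirical measure `μ_τ = (1/n) Σ_{j ∈ τ} δ_{x_j}`. -/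
def empOfSubset {d N : ℕ} (n : ℕ) (x : Fin N → (Fin d → ℝ))
    (τ : Finset (Fin N)) : Measure (Fin d → ℝ) :=
  (n : ℝ≥0∞)⁻¹ • ∑ j ∈ τ, Measure.dirac (x j)

/-- The average measure `μ = (1/N) Σ_{j=1}^N δ_{x_j}`. -/
def avgMeasure {d N : ℕ} (x : Fin N → (Fin d → ℝ)) : Measure (Fin d → ℝ) :=
  (N : ℝ≥0∞)⁻¹ • ∑ j, Measure.dirac (x j)


lemma euclidDist_eq {d : ℕ} (x y : Fin d → ℝ) :
    euclidDist x y = dist (WithLp.toLp 2 x) (WithLp.toLp 2 y) := by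
  rw [EuclideanSpace.dist_eq, euclidDist]
  simp [Real.dist_eq, sq_abs]

lemma euclidDist_self {d : ℕ} (x : Fin d → ℝ) : euclidDist x x = 0 := by
  simp [euclidDist]

lemma euclidDist_nonneg {d : ℕ} (x y : Fin d → ℝ) : 0 ≤ euclidDist x y :=
  Real.sqrt_nonneg _

lemma euclidDist_comm {d : ℕ} (x y : Fin d → ℝ) : euclidDist x y = euclidDist y x := by
  simp only [euclidDist_eq, dist_comm]

lemma euclidDist_triangle {d : ℕ} (x y z : Fin d → ℝ) :
    euclidDist x z ≤ euclidDist x y + euclidDist y z := by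
  simp only [euclidDist_eq]
  exact dist_triangle _ _ _

lemma euclidDist_le {d : ℕ} (x y : Fin d → ℝ) (r : ℝ) (hr : 0 ≤ r) (h : ∀ i, |x i - y i| ≤ r) :
    euclidDist x y ≤ Real.sqrt d * r := by
  unfold euclidDist
  rw [← Real.sqrt_sq hr, ← Real.sqrt_mul (by positivity)]
  apply Real.sqrt_le_sqrt
  calc ∑ i, (x i - y i) ^ 2 ≤ ∑ i : Fin d, r ^ 2 := by
        apply Finset.sum_le_sum
        intro i _
        rw [← sq_abs]
        exact pow_le_pow_left₀ (abs_nonneg _) (h i) 2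
    _ = d * r ^ 2 := by simp

/-- finite Kantorovich duality -/
lemma finite_duality {X : Type*} {N : ℕ} [NeZero N] (x : Fin N → X) (c : X → X → ℝ)
    (c0 : ∀ u, c u u = 0) (ctri : ∀ u v w, c u w ≤ c u v + c v w)
    (a b : Fin N → ℝ) (ha : ∀ i, 0 ≤ a i) (hb : ∀ i, 0 ≤ b i) (ha1 : ∑ i, a i = 1)
    (hb1 : ∑ i, b i = 1) (S : ℝ)
    (hS : ∀ f : X → ℝ, (∀ u v, f u - f v ≤ c u v) → ∑ i, (a i - b i) * f (x i) ≤ S) :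
    ∃ γ : Fin N → Fin N → ℝ, (∀ i j, 0 ≤ γ i j) ∧ (∀ i, ∑ j, γ i j = a i) ∧
      (∀ j, ∑ i, γ i j = b j) ∧ ∑ i, ∑ j, γ i j * c (x i) (x j) ≤ S := by
  classical
  by_contra hcon
  push Not at hcon
  let L : (Fin N × Fin N → ℝ) →ₗ[ℝ] ((Fin N → ℝ) × (Fin N → ℝ) × ℝ) :=
    { toFun := fun γ => (fun i => ∑ j, γ (i, j), fun j => ∑ i, γ (i, j),
        ∑ i, ∑ j, γ (i, j) * c (x i) (x j))
      map_add' := by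
        intro g h
        refine Prod.ext ?_ (Prod.ext ?_ ?_)
        · funext i; simp [Finset.sum_add_distrib]
        · funext i; simp [Finset.sum_add_distrib]
        · simp [Finset.sum_add_distrib, add_mul]
      map_smul' := by
        intro r h
        refine Prod.ext ?_ (Prod.ext ?_ ?_)
        · funext i; simp [Finset.mul_sum]
        · funext i; simp [Finset.mul_sum]
        · simp [Finset.mul_sum, mul_assoc] }
  have hLc : Continuous L := L.continuous_of_finiteDimensional
  let C : Set ((Fin N → ℝ) × (Fin N → ℝ) × ℝ) := L '' (stdSimplex ℝ (Fin N × Fin N))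
  let D : Set ((Fin N → ℝ) × (Fin N → ℝ) × ℝ) := {p | p.1 = a ∧ p.2.1 = b ∧ p.2.2 ≤ S}
  have hCconv : Convex ℝ C := (convex_stdSimplex ℝ _).linear_image L
  have hCcomp : IsCompact C := (isCompact_stdSimplex ℝ _).image hLc
  have hDconv : Convex ℝ D := by
    rintro p ⟨hp1, hp2, hp3⟩ q ⟨hq1, hq2, hq3⟩ s t hs ht hst
    refine ⟨?_, ?_, ?_⟩
    · simp only [Prod.fst_add, Prod.smul_fst, hp1, hq1, ← add_smul, hst, one_smul]
    · simp only [Prod.fst_add, Prod.smul_fst, Prod.snd_add, Prod.smul_snd, hp2, hq2, ← add_smul,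
        hst, one_smul]
    · simp only [Prod.snd_add, Prod.smul_snd, smul_eq_mul]
      calc s * p.2.2 + t * q.2.2 ≤ s * S + t * S := by gcongr
        _ = S := by rw [← add_mul, hst, one_mul]
  have hDclosed : IsClosed D := by
    refine IsClosed.and ?_ (IsClosed.and ?_ ?_)
    · exact isClosed_eq continuous_fst continuous_const
    · exact isClosed_eq (by fun_prop) continuous_const
    · exact isClosed_le (by fun_prop) continuous_const
  have hdisj : Disjoint D C := by
    rw [Set.disjoint_left]
    rintro p ⟨hp1, hp2, hp3⟩ ⟨γ, ⟨hγ0, hγ1⟩, rfl⟩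
    have := hcon (fun i j => γ (i, j)) (fun i j => hγ0 _) (fun i => congrFun hp1 i)
      (fun j => congrFun hp2 j)
    exact absurd hp3 (not_le.mpr this)
  obtain ⟨F, u, v, hFD, huv, hFC⟩ :=
    geometric_hahn_banach_closed_compact hDconv hDclosed hCconv hCcomp hdisj
  -- extract coordinates
  let φ : Fin N → ℝ := fun i => F (Pi.single i 1, 0, 0)
  let ψ : Fin N → ℝ := fun i => F (0, Pi.single i 1, 0)
  let l : ℝ := F (0, 0, 1)
  have hF : ∀ p : ((Fin N → ℝ) × (Fin N → ℝ) × ℝ), F p = ∑ i, p.1 i * φ i + ∑ i, p.2.1 i * ψ i + p.2.2 * l := by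
    intro p
    have : p = ∑ i, p.1 i • ((Pi.single i 1, 0, 0) : ((Fin N → ℝ) × (Fin N → ℝ) × ℝ)) + ∑ i, p.2.1 i • ((0, Pi.single i 1, 0) : ((Fin N → ℝ) × (Fin N → ℝ) × ℝ))
        + p.2.2 • ((0, 0, 1) : ((Fin N → ℝ) × (Fin N → ℝ) × ℝ)) := by
      refine Prod.ext ?_ (Prod.ext ?_ ?_)
      · funext k; simp [Prod.fst_sum, Finset.sum_apply, Pi.single_apply]
      · funext k; simp [Prod.fst_sum, Prod.snd_sum, Finset.sum_apply, Pi.single_apply]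
      · simp [Prod.snd_sum]
    conv_lhs => rw [this]
    simp only [map_add, map_sum, map_smul, smul_eq_mul, φ, ψ, l]
  have hD' : ∀ t ≤ S, ∑ i, a i * φ i + ∑ i, b i * ψ i + t * l < u := by
    intro t ht
    have := hFD (a, b, t) ⟨rfl, rfl, ht⟩
    rwa [hF] at this
  have hC' : ∀ i j, v < φ i + ψ j + c (x i) (x j) * l := by
    intro i j
    have := hFC (L (Pi.single (i, j) 1)) ⟨_, single_mem_stdSimplex ℝ (i, j), rfl⟩
    rw [hF] at this
    convert this using 1
    simp only [L, LinearMap.coe_mk, AddHom.coe_mk, Pi.single_apply, Prod.mk.injEq, ite_and]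
    simp
  have hl0 : 0 ≤ l := by
    by_contra hl
    push Not at hl
    let P := ∑ i, a i * φ i + ∑ i, b i * ψ i
    have h1 := hD' (min S ((u - P) / l)) (min_le_left _ _)
    have h2 : (u - P) / l * l ≤ min S ((u - P) / l) * l :=
      mul_le_mul_of_nonpos_right (min_le_right _ _) hl.le
    rw [div_mul_cancel₀ _ hl.ne] at h2
    have : P + (u - P) < u := by simp only [P] at *; linarith
    linarith
  have hDS := hD' S le_rfl
  -- the averaged version
  have avg : ∀ (p : Fin N → ℝ) (r : ℝ), (∀ i, r ≤ p i) → r ≤ ∑ i, a i * p i := by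
    intro p r h
    calc r = ∑ i, a i * r := by rw [← Finset.sum_mul, ha1, one_mul]
      _ ≤ _ := Finset.sum_le_sum fun i _ => mul_le_mul_of_nonneg_left (h i) (ha i)
  have avgb : ∀ (p : Fin N → ℝ) (r : ℝ), (∀ i, r ≤ p i) → r ≤ ∑ i, b i * p i := by
    intro p r h
    calc r = ∑ i, b i * r := by rw [← Finset.sum_mul, hb1, one_mul]
      _ ≤ _ := Finset.sum_le_sum fun i _ => mul_le_mul_of_nonneg_left (h i) (hb i)
  rcases hl0.eq_or_lt with hl | hl
  · rw [← hl] at hDS hC'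
    have h1 : ∀ j, v - ψ j ≤ ∑ i, a i * φ i := by
      intro j
      apply avg
      intro i
      have := hC' i j
      linarith
    have h2 : v - ∑ i, a i * φ i ≤ ∑ j, b j * ψ j := by
      apply avgb
      intro j
      linarith [h1 j]
    linarith
  · let f : X → ℝ := fun y => Finset.univ.inf' Finset.univ_nonempty (fun j => c y (x j) + ψ j / l)
    have hf : ∀ u v, f u - f v ≤ c u v := by
      intro u v
      obtain ⟨j, _, hj⟩ := Finset.exists_mem_eq_inf' (Finset.univ_nonempty (α := Fin N))
        (fun j => c v (x j) + ψ j / l)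
      have h1 : f v = c v (x j) + ψ j / l := hj
      have h2 : f u ≤ c u (x j) + ψ j / l := Finset.inf'_le _ (Finset.mem_univ j)
      linarith [ctri u v (x j)]
    have hfS := hS f hf
    have hfu : ∀ i, f (x i) ≤ ψ i / l := by
      intro i
      have : f (x i) ≤ c (x i) (x i) + ψ i / l := Finset.inf'_le _ (Finset.mem_univ i)
      rwa [c0, zero_add] at this
    have hfl : ∀ i, (v - φ i) / l ≤ f (x i) := by
      intro i
      obtain ⟨j, _, hj⟩ := Finset.exists_mem_eq_inf' (Finset.univ_nonempty (α := Fin N))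
        (fun j => c (x i) (x j) + ψ j / l)
      have h1 : f (x i) = c (x i) (x j) + ψ j / l := hj
      rw [h1, div_le_iff₀ hl, add_mul, div_mul_cancel₀ _ hl.ne']
      linarith [hC' i j]
    have h1 : v ≤ ∑ i, a i * (f (x i) * l + φ i) := by
      apply avg
      intro i
      have := (div_le_iff₀ hl).1 (hfl i)
      linarith
    have h2 : 0 ≤ ∑ i, b i * (ψ i - f (x i) * l) := by
      apply avgb
      intro i
      have := (le_div_iff₀ hl).1 (hfu i)
      linarith
    simp only [mul_add, mul_sub, sub_mul, Finset.sum_add_distrib, Finset.sum_sub_distrib,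
      ← mul_assoc, ← Finset.sum_mul] at h1 h2 hfS
    have h3 := mul_le_mul_of_nonneg_right hfS hl.le
    rw [sub_mul] at h3
    linarith

lemma W1_le_of_dual {d N n : ℕ} (hN : 1 ≤ N) (hn1 : 1 ≤ n)
    (x : Fin N → (Fin d → ℝ)) (τ : Finset (Fin N)) (hτ : τ.card = n) (S : ℝ)
    (hS : ∀ f : (Fin d → ℝ) → ℝ, (∀ u v, f u - f v ≤ euclidDist u v) →
      (∑ j ∈ τ, f (x j)) / n - (∑ j, f (x j)) / N ≤ S) :
    W1 (empOfSubset n x τ) (avgMeasure x) ≤ ENNReal.ofReal S := by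
  classical
  have : NeZero N := ⟨by omega⟩
  have hn0 : (n : ℝ) ≠ 0 := by positivity
  have hN0 : (N : ℝ) ≠ 0 := by positivity
  have hnpos : (0 : ℝ) < n := by positivity
  have hNpos : (0 : ℝ) < N := by positivity
  obtain ⟨γ, h0, hr, hc, hcost⟩ := finite_duality x euclidDist euclidDist_self
    euclidDist_triangle (fun j => if j ∈ τ then (n : ℝ)⁻¹ else 0) (fun _ => (N : ℝ)⁻¹)
    (fun i => by positivity) (fun i => by positivity)
    (by simp [hτ, hn0]) (by simp [hN0]) S
    (by
      intro f hf
      refine le_trans (le_of_eq ?_) (hS f hf)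
      simp only [sub_mul, Finset.sum_sub_distrib, ite_mul, zero_mul, Finset.sum_ite_mem,
        Finset.univ_inter, ← Finset.mul_sum]
      ring)
  let Γ : Measure ((Fin d → ℝ) × (Fin d → ℝ)) :=
    ∑ i, ∑ j, ENNReal.ofReal (γ i j) • Measure.dirac (x i, x j)
  have hsum : ∀ (s : Finset (Fin N)) (g : Fin N → ℝ), (∀ i, 0 ≤ g i) →
      ∑ i ∈ s, ENNReal.ofReal (g i) = ENNReal.ofReal (∑ i ∈ s, g i) := by
    intro s g hg
    rw [ENNReal.ofReal_sum_of_nonneg (fun i _ => hg i)]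
  have hcoup : IsCoupling Γ (empOfSubset n x τ) (avgMeasure x) := by
    constructor
    · ext A hA
      rw [Measure.map_apply measurable_fst hA]
      simp only [Γ, Measure.finsetSum_apply, Measure.smul_apply, empOfSubset, smul_eq_mul]
      have : ∀ i j, (Measure.dirac (x i, x j)) (Prod.fst ⁻¹' A) = Measure.dirac (x i) A := by
        intro i j
        rw [Measure.dirac_apply' _ hA, Measure.dirac_apply' _ (measurable_fst hA)]
        rfl
      simp only [this, ← Finset.sum_mul, hsum _ _ (h0 _), hr]
      rw [Finset.mul_sum, ← Finset.sum_subset (Finset.subset_univ τ)]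
      · apply Finset.sum_congr rfl
        intro i hi
        rw [if_pos hi, ENNReal.ofReal_inv_of_pos hnpos, ENNReal.ofReal_natCast]
      · intro i _ hi
        simp [hi]
    · ext A hA
      rw [Measure.map_apply measurable_snd hA]
      simp only [Γ, Measure.finsetSum_apply, Measure.smul_apply, avgMeasure, smul_eq_mul]
      have : ∀ i j, (Measure.dirac (x i, x j)) (Prod.snd ⁻¹' A) = Measure.dirac (x j) A := by
        intro i j
        rw [Measure.dirac_apply' _ hA, Measure.dirac_apply' _ (measurable_snd hA)]
        rfl
      rw [Finset.sum_comm]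
      simp only [this, ← Finset.sum_mul, hsum _ (fun i => γ i _) (fun i => h0 i _), hc]
      rw [Finset.mul_sum]
      apply Finset.sum_congr rfl
      intro i hi
      rw [ENNReal.ofReal_inv_of_pos hNpos, ENNReal.ofReal_natCast]
  refine (iInf₂_le Γ hcoup).trans ?_
  simp only [Γ, lintegral_finsetSum_measure, lintegral_smul_measure, lintegral_dirac, smul_eq_mul]
  simp only [← ENNReal.ofReal_mul (h0 _ _)]
  refine le_trans (le_of_eq ?_) (ENNReal.ofReal_le_ofReal hcost)
  rw [ENNReal.ofReal_sum_of_nonneg]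
  · apply Finset.sum_congr rfl
    intro i _
    rw [ENNReal.ofReal_sum_of_nonneg]
    intro j _
    exact mul_nonneg (h0 _ _) (euclidDist_nonneg _ _)
  · intro i _
    apply Finset.sum_nonneg
    intro j _
    exact mul_nonneg (h0 _ _) (euclidDist_nonneg _ _)

/-- number of `n`-subsets containing a given pair does not depend on the pair -/
lemma count_perm {N n : ℕ} (e : Equiv.Perm (Fin N)) (i j : Fin N) :
    ((subsetsCard N n).filter (fun τ => e i ∈ τ ∧ e j ∈ τ)).card =
    ((subsetsCard N n).filter (fun τ => i ∈ τ ∧ j ∈ τ)).card := by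
  symm
  apply Finset.card_bij (fun τ _ => τ.map e.toEmbedding)
  · intro τ hτ
    simp only [subsetsCard, Finset.mem_filter, Finset.mem_powersetCard_univ, Finset.card_map] at hτ ⊢
    simpa using hτ
  · intro a _ b _ h
    exact Finset.map_injective _ h
  · intro τ hτ
    refine ⟨τ.map e.symm.toEmbedding, ?_, ?_⟩
    · simp only [subsetsCard, Finset.mem_filter, Finset.mem_powersetCard_univ, Finset.card_map] at hτ ⊢
      refine ⟨hτ.1, ?_, ?_⟩
      · simpa [Finset.mem_map_equiv] using hτ.2.1
      · simpa [Finset.mem_map_equiv] using hτ.2.2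
    · ext a
      simp [Finset.mem_map_equiv]

lemma exists_perm_pair {N : ℕ} {i j i' j' : Fin N} (h : i ≠ j) (h' : i' ≠ j') :
    ∃ e : Equiv.Perm (Fin N), e i = i' ∧ e j = j' := by
  have h2 : Equiv.swap i i' j ≠ i' := by
    intro hh
    apply h
    have : Equiv.swap i i' j = Equiv.swap i i' i := by rw [hh, Equiv.swap_apply_left]
    exact ((Equiv.swap i i').injective this).symm
  refine ⟨(Equiv.swap i i').trans (Equiv.swap (Equiv.swap i i' j) j'), ?_, ?_⟩
  · rw [Equiv.trans_apply, Equiv.swap_apply_left]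
    exact Equiv.swap_apply_of_ne_of_ne h2.symm h'
  · rw [Equiv.trans_apply, Equiv.swap_apply_left]

lemma second_moment {N n : ℕ} (hN : 2 ≤ N) (η : Fin N → ℝ) (h0 : ∑ j, η j = 0) :
    ∑ τ ∈ subsetsCard N n, (∑ j ∈ τ, η j) ^ 2 ≤
      ((subsetsCard N n).card * n / N : ℝ) * ∑ j, η j ^ 2 := by
  classical
  let cnt : Fin N → Fin N → ℝ := fun i j =>
    (((subsetsCard N n).filter (fun τ => i ∈ τ ∧ j ∈ τ)).card : ℝ)
  let i0 : Fin N := ⟨0, by omega⟩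
  let i1 : Fin N := ⟨1, by omega⟩
  have h01 : i0 ≠ i1 := by simp [i0, i1]
  have hA : ∀ i, cnt i i = cnt i0 i0 := by
    intro i
    have := count_perm (n := n) (Equiv.swap i0 i) i0 i0
    rw [Equiv.swap_apply_left] at this
    simp only [cnt, this]
  have hB : ∀ i j, i ≠ j → cnt i j = cnt i0 i1 := by
    intro i j hij
    obtain ⟨e, h1, h2⟩ := exists_perm_pair h01 hij
    have := count_perm (n := n) e i0 i1
    rw [h1, h2] at this
    simp only [cnt, this]
  have hB0 : 0 ≤ cnt i0 i1 := Nat.cast_nonneg _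
  have hAval : N * cnt i0 i0 = (subsetsCard N n).card * n := by
    have h1 : ∑ i : Fin N, cnt i i = N * cnt i0 i0 := by
      rw [Finset.sum_congr rfl (fun i _ => hA i)]; simp
    rw [← h1]
    simp only [cnt, and_self, Finset.card_filter, Nat.cast_sum]
    rw [Finset.sum_comm]
    rw [Finset.sum_congr rfl (g := fun _ => (n : ℝ))]
    · simp
    · intro τ hτ
      rw [← (Finset.mem_powersetCard_univ.1 hτ)]
      simp
  have hexp : ∑ τ ∈ subsetsCard N n, (∑ j ∈ τ, η j) ^ 2 = ∑ i, ∑ j, η i * η j * cnt i j := by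
    have : ∀ τ : Finset (Fin N), (∑ j ∈ τ, η j) ^ 2 =
        ∑ i, ∑ j, η i * η j * (if i ∈ τ ∧ j ∈ τ then 1 else 0) := by
      intro τ
      have h1 : ∑ j ∈ τ, η j = ∑ j, if j ∈ τ then η j else 0 := by simp
      rw [h1, sq, Finset.sum_mul_sum]
      apply Finset.sum_congr rfl; intro i _
      apply Finset.sum_congr rfl; intro j _
      by_cases hi : i ∈ τ <;> by_cases hj : j ∈ τ <;> simp [hi, hj]
    rw [Finset.sum_congr rfl (fun τ _ => this τ), Finset.sum_comm]
    apply Finset.sum_congr rfl; intro i _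
    rw [Finset.sum_comm]
    apply Finset.sum_congr rfl; intro j _
    rw [← Finset.mul_sum]
    simp [cnt]
  have hexp2 : ∑ i, ∑ j, η i * η j * cnt i j = (cnt i0 i0 - cnt i0 i1) * ∑ j, η j ^ 2 := by
    have : ∀ i j, η i * η j * cnt i j = cnt i0 i1 * (η i * η j) +
        if i = j then (cnt i0 i0 - cnt i0 i1) * η i ^ 2 else 0 := by
      intro i j
      split_ifs with h
      · subst h; rw [hA]; ring
      · rw [hB i j h]; ring
    simp only [this, Finset.sum_add_distrib, ← Finset.mul_sum, h0]
    simp [Finset.mul_sum]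
  rw [hexp, hexp2]
  apply mul_le_mul_of_nonneg_right
  · rw [← hAval, mul_div_cancel_left₀]
    · linarith
    · have : (0 : ℝ) < N := by exact_mod_cast (by omega : 0 < N)
      exact this.ne'
  · exact Finset.sum_nonneg fun j _ => sq_nonneg _

lemma first_moment {N n : ℕ} (hN : 2 ≤ N) (hn1 : 1 ≤ n) (θ : Fin N → ℝ) :
    ∑ τ ∈ subsetsCard N n, |(∑ j ∈ τ, θ j) / n - (∑ j, θ j) / N| ≤
      (subsetsCard N n).card * Real.sqrt ((∑ j, θ j ^ 2) / (n * N)) := by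
  have hn : (0 : ℝ) < n := by positivity
  have hNp : (0 : ℝ) < N := by exact_mod_cast (by omega : 0 < N)
  let m : ℝ := (∑ j, θ j) / N
  let η : Fin N → ℝ := fun j => θ j - m
  have h0 : ∑ j, η j = 0 := by
    simp only [η, Finset.sum_sub_distrib, m]
    simp
    field_simp
    simp
  have hη : ∑ j, η j ^ 2 ≤ ∑ j, θ j ^ 2 := by
    have : ∑ j, θ j ^ 2 = ∑ j, η j ^ 2 + 2 * m * ∑ j, η j + N * m ^ 2 := by
      have : ∀ j, θ j ^ 2 = η j ^ 2 + 2 * m * η j + m ^ 2 := by intro j; simp only [η]; ring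
      simp only [this, Finset.sum_add_distrib, Finset.mul_sum]
      simp
    rw [this, h0]
    have : 0 ≤ N * m ^ 2 := by positivity
    linarith
  have hdev : ∀ τ ∈ subsetsCard N n, |(∑ j ∈ τ, θ j) / n - (∑ j, θ j) / N| = |∑ j ∈ τ, η j| / n := by
    intro τ hτ
    have hc := Finset.mem_powersetCard_univ.1 hτ
    rw [← abs_of_pos hn, ← abs_div, abs_of_pos hn]
    congr 1
    simp only [η, Finset.sum_sub_distrib, Finset.sum_const, hc, nsmul_eq_mul, m]
    field_simp
  rw [Finset.sum_congr rfl hdev, ← Finset.sum_div]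
  set T := subsetsCard N n
  have hcs : (∑ τ ∈ T, |∑ j ∈ τ, η j|) ^ 2 ≤ T.card * ∑ τ ∈ T, |∑ j ∈ τ, η j| ^ 2 :=
    sq_sum_le_card_mul_sum_sq
  simp only [sq_abs] at hcs
  have h2 := second_moment (n := n) hN η h0
  have h3 : (∑ τ ∈ T, |∑ j ∈ τ, η j|) ^ 2 ≤ (T.card * n) ^ 2 * ((∑ j, θ j ^ 2) / (n * N)) := by
    calc _ ≤ _ := hcs
      _ ≤ T.card * ((T.card * n / N : ℝ) * ∑ j, η j ^ 2) := by gcongr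
      _ ≤ T.card * ((T.card * n / N : ℝ) * ∑ j, θ j ^ 2) := by gcongr
      _ = _ := by field_simp
  have h4 := Real.le_sqrt_of_sq_le h3
  rw [Real.sqrt_mul (by positivity), Real.sqrt_sq (by positivity)] at h4
  rw [div_le_iff₀ hn]
  linarith

lemma core_bound {d N n : ℕ} (hN : 2 ≤ N) (hn1 : 1 ≤ n)
    (x : Fin N → (Fin d → ℝ)) (K : ℕ) (ι : ℕ → Type) [∀ k, Fintype (ι k)]
    (θ : ∀ k, Fin N → ι k → ℝ) (b R : ℕ → ℝ) (ε : ℝ) (hb : ∀ k, 0 ≤ b k)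
    (hθ : ∀ k j, ∑ i, θ k j i ^ 2 ≤ R k)
    (hf : ∀ f : (Fin d → ℝ) → ℝ, (∀ u v, f u - f v ≤ euclidDist u v) →
      ∃ (c : ℝ) (g : ∀ k, ι k → ℝ), (∀ k i, |g k i| ≤ b k) ∧
        ∀ j, |f (x j) - c - ∑ k ∈ Finset.range K, ∑ i, θ k j i * g k i| ≤ ε) :
    (∑ τ ∈ subsetsCard N n, W1 (empOfSubset n x τ) (avgMeasure x)) /
          ((subsetsCard N n).card : ℝ≥0∞)
        ≤ ENNReal.ofReal (2 * ε + ∑ k ∈ Finset.range K,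
          b k * Real.sqrt (Fintype.card (ι k) * R k / n)) := by
  classical
  have hn : (0 : ℝ) < n := by positivity
  have hNp : (0 : ℝ) < N := by exact_mod_cast (by omega : 0 < N)
  let D : Finset (Fin N) → (Fin N → ℝ) → ℝ := fun τ h => (∑ j ∈ τ, h j) / n - (∑ j, h j) / N
  let S : Finset (Fin N) → ℝ := fun τ => 2 * ε +
    ∑ k ∈ Finset.range K, b k * ∑ i, |D τ (fun j => θ k j i)|
  have hε : 0 ≤ ε := by
    obtain ⟨c, g, _, h⟩ := hf (fun _ => 0) (fun u v => by simpa using euclidDist_nonneg u v)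
    exact (abs_nonneg _).trans (h ⟨0, by omega⟩)
  have hS0 : ∀ τ, 0 ≤ S τ := by
    intro τ
    apply add_nonneg (by positivity)
    exact Finset.sum_nonneg fun k _ => mul_nonneg (hb k) (Finset.sum_nonneg fun i _ => abs_nonneg _)
  have h1 : ∀ τ ∈ subsetsCard N n, W1 (empOfSubset n x τ) (avgMeasure x) ≤ ENNReal.ofReal (S τ) := by
    intro τ hτ
    have hc := Finset.mem_powersetCard_univ.1 hτ
    apply W1_le_of_dual (by omega) hn1 x τ hc
    intro f hfl
    obtain ⟨c, g, hg, hr⟩ := hf f hfl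
    let r : Fin N → ℝ := fun j => f (x j) - c - ∑ k ∈ Finset.range K, ∑ i, θ k j i * g k i
    have hfe : ∀ j, f (x j) = c + ∑ k ∈ Finset.range K, ∑ i, θ k j i * g k i + r j := by
      intro j; simp only [r]; ring
    have hDe : (∑ j ∈ τ, f (x j)) / n - (∑ j, f (x j)) / N =
        ∑ k ∈ Finset.range K, ∑ i, g k i * D τ (fun j => θ k j i) + D τ r := by
      have hswap : ∀ s : Finset (Fin N), ∑ j ∈ s, ∑ k ∈ Finset.range K, ∑ i, θ k j i * g k i =
          ∑ k ∈ Finset.range K, ∑ i, g k i * ∑ j ∈ s, θ k j i := by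
        intro s
        rw [Finset.sum_comm]
        apply Finset.sum_congr rfl; intro k _
        rw [Finset.sum_comm]
        apply Finset.sum_congr rfl; intro i _
        rw [Finset.mul_sum]
        exact Finset.sum_congr rfl fun j _ => mul_comm _ _
      simp only [hfe, Finset.sum_add_distrib, hswap, D, mul_sub, Finset.sum_sub_distrib,
        Finset.sum_const, hc, Finset.card_univ, Fintype.card_fin, nsmul_eq_mul, mul_div_assoc',
        ← Finset.sum_div]
      field_simp
      ring
    rw [hDe]
    have hDr : D τ r ≤ 2 * ε := by
      have e1 : ∑ j ∈ τ, r j ≤ n * ε := by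
        calc ∑ j ∈ τ, r j ≤ ∑ j ∈ τ, ε := Finset.sum_le_sum fun j _ => (abs_le.1 (hr j)).2
          _ = n * ε := by simp [hc]
      have e2 : -(N * ε) ≤ ∑ j, r j := by
        calc -(N * ε) = ∑ j : Fin N, -ε := by simp
          _ ≤ ∑ j, r j := Finset.sum_le_sum fun j _ => (abs_le.1 (hr j)).1
      have e3 : (∑ j ∈ τ, r j) / n ≤ ε := by rw [div_le_iff₀ hn]; linarith
      have e4 : -ε ≤ (∑ j, r j) / N := by rw [le_div_iff₀ hNp]; linarith
      simp only [D]; linarith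
    have hsum : ∑ k ∈ Finset.range K, ∑ i, g k i * D τ (fun j => θ k j i) ≤
        ∑ k ∈ Finset.range K, b k * ∑ i, |D τ (fun j => θ k j i)| := by
      apply Finset.sum_le_sum; intro k _
      rw [Finset.mul_sum]
      apply Finset.sum_le_sum; intro i _
      calc _ ≤ |g k i * D τ (fun j => θ k j i)| := le_abs_self _
        _ = |g k i| * |D τ (fun j => θ k j i)| := abs_mul _ _
        _ ≤ _ := by gcongr; exact hg k i
    simp only [S]; linarith
  have h2 : ∑ τ ∈ subsetsCard N n, S τ ≤ (subsetsCard N n).card * (2 * ε + ∑ k ∈ Finset.range K,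
          b k * Real.sqrt (Fintype.card (ι k) * R k / n)) := by
    set T := subsetsCard N n
    simp only [S, Finset.sum_add_distrib, Finset.sum_const, nsmul_eq_mul, mul_add]
    gcongr
    rw [Finset.sum_comm, Finset.mul_sum]
    apply Finset.sum_le_sum; intro k _
    rw [← Finset.mul_sum, mul_left_comm]
    apply mul_le_mul_of_nonneg_left _ (hb k)
    rw [Finset.sum_comm]
    calc ∑ i, ∑ τ ∈ T, |D τ (fun j => θ k j i)|
        ≤ ∑ i, T.card * Real.sqrt ((∑ j, θ k j i ^ 2) / (n * N)) :=
          Finset.sum_le_sum fun i _ => first_moment hN hn1 _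
      _ = T.card * ∑ i, Real.sqrt ((∑ j, θ k j i ^ 2) / (n * N)) := by rw [Finset.mul_sum]
      _ ≤ _ := by
        apply mul_le_mul_of_nonneg_left _ (Nat.cast_nonneg _)
        apply Real.le_sqrt_of_sq_le
        have hcs : (∑ i, Real.sqrt ((∑ j, θ k j i ^ 2) / (n * N))) ^ 2 ≤
            (Finset.univ : Finset (ι k)).card * ∑ i, Real.sqrt ((∑ j, θ k j i ^ 2) / (n * N)) ^ 2 :=
          sq_sum_le_card_mul_sum_sq
        refine hcs.trans ?_
        rw [Finset.card_univ, mul_div_assoc]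
        apply mul_le_mul_of_nonneg_left _ (Nat.cast_nonneg _)
        have : ∀ i, Real.sqrt ((∑ j, θ k j i ^ 2) / (n * N)) ^ 2 = (∑ j, θ k j i ^ 2) / (n * N) :=
          fun i => Real.sq_sqrt (div_nonneg (Finset.sum_nonneg fun j _ => sq_nonneg _) (by positivity))
        simp only [this]
        rw [← Finset.sum_div, Finset.sum_comm, div_le_div_iff₀ (by positivity) hn]
        have : ∑ j, ∑ i, θ k j i ^ 2 ≤ N * R k := by
          calc _ ≤ ∑ j : Fin N, R k := Finset.sum_le_sum fun j _ => hθ k j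
            _ = _ := by simp
        nlinarith
  apply ENNReal.div_le_of_le_mul
  calc _ ≤ ∑ τ ∈ subsetsCard N n, ENNReal.ofReal (S τ) := Finset.sum_le_sum h1
    _ = ENNReal.ofReal (∑ τ ∈ subsetsCard N n, S τ) := by
      rw [ENNReal.ofReal_sum_of_nonneg fun τ _ => hS0 τ]
    _ ≤ ENNReal.ofReal _ := ENNReal.ofReal_le_ofReal h2
    _ = _ := by
      rw [ENNReal.ofReal_mul (Nat.cast_nonneg _), ENNReal.ofReal_natCast, mul_comm]

/-- dyadic cell index -/
def cellIdx (k : ℕ) (t : ℝ) : ℕ := min ⌊2 ^ k * t⌋₊ (2 ^ k - 1)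

lemma cellIdx_lt (k : ℕ) (t : ℝ) : cellIdx k t < 2 ^ k := by
  have : 0 < 2 ^ k := by positivity
  unfold cellIdx; omega

lemma cellIdx_half (k : ℕ) (t : ℝ) : cellIdx (k + 1) t / 2 = cellIdx k t := by
  have h : ⌊2 ^ (k + 1) * t⌋₊ / 2 = ⌊2 ^ k * t⌋₊ := by
    have := Nat.floor_div_natCast (2 ^ (k + 1) * t) 2
    rw [← this]
    congr 1
    push_cast
    ring
  have : 0 < 2 ^ k := by positivity
  unfold cellIdx
  rw [← h, pow_succ]
  omega

lemma cellIdx_dist (k : ℕ) (t : ℝ) (ht : t ∈ Set.Icc (0 : ℝ) 1) :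
    |t - (cellIdx k t + 1 / 2) / 2 ^ k| ≤ 1 / 2 / 2 ^ k := by
  obtain ⟨h0, h1⟩ := ht
  have hp : (0 : ℝ) < 2 ^ k := by positivity
  have hp' : 1 ≤ 2 ^ k := Nat.one_le_two_pow
  have hle : (cellIdx k t : ℝ) ≤ 2 ^ k * t := by
    calc (cellIdx k t : ℝ) ≤ (⌊2 ^ k * t⌋₊ : ℝ) := Nat.cast_le.2 (min_le_left _ _)
      _ ≤ _ := Nat.floor_le (by positivity)
  have hge : 2 ^ k * t ≤ cellIdx k t + 1 := by
    unfold cellIdx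
    rcases min_choice ⌊2 ^ k * t⌋₊ (2 ^ k - 1) with h | h
    · rw [h]; exact (Nat.lt_floor_add_one _).le
    · rw [h, Nat.cast_sub hp']; push_cast; nlinarith
  have : t - (cellIdx k t + 1 / 2) / 2 ^ k = (2 ^ k * t - cellIdx k t - 1 / 2) / 2 ^ k := by
    field_simp
    ring
  rw [this, abs_div, abs_of_pos hp]
  gcongr
  rw [abs_le]; constructor <;> linarith

/-- centre of a dyadic cell -/
def cen {d : ℕ} (k : ℕ) (Q : Fin d → ℕ) : Fin d → ℝ := fun i => (Q i + 1 / 2) / 2 ^ k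

lemma lip_abs {d : ℕ} {f : (Fin d → ℝ) → ℝ} (hf : ∀ u v, f u - f v ≤ euclidDist u v) (u v) :
    |f u - f v| ≤ euclidDist u v := by
  rw [abs_le]
  constructor
  · have := hf v u
    rw [euclidDist_comm] at this; linarith
  · exact hf u v

lemma dyadic_bound {d N n : ℕ} (hN : 2 ≤ N) (hn1 : 1 ≤ n)
    (x : Fin N → (Fin d → ℝ)) (hx : ∀ j i, x j i ∈ Set.Icc (0 : ℝ) 1) (K : ℕ) :
    (∑ τ ∈ subsetsCard N n, W1 (empOfSubset n x τ) (avgMeasure x)) /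
          ((subsetsCard N n).card : ℝ≥0∞)
        ≤ ENNReal.ofReal (2 * (Real.sqrt d * (1 / 2 / 2 ^ K)) + ∑ k ∈ Finset.range K,
          Real.sqrt d * (1 / 2 / 2 ^ (k + 1)) * Real.sqrt ((2 ^ (k + 1)) ^ d / n)) := by
  classical
  have := core_bound hN hn1 x K (fun k => Fin d → Fin (2 ^ (k + 1)))
    (fun k j Q => if Q = (fun i => ⟨cellIdx (k + 1) (x j i), cellIdx_lt _ _⟩) then 1 else 0)
    (fun k => Real.sqrt d * (1 / 2 / 2 ^ (k + 1))) (fun _ => 1)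
    (Real.sqrt d * (1 / 2 / 2 ^ K)) (fun k => by positivity) (fun k j => by simp)
    (by
      intro f hf
      refine ⟨f (cen 0 (fun _ => 0)), fun k Q => f (cen (k + 1) (fun i => (Q i : ℕ))) -
        f (cen k (fun i => (Q i : ℕ) / 2)), ?_, ?_⟩
      · intro k Q
        refine (lip_abs hf _ _).trans (euclidDist_le _ _ _ (by positivity) ?_)
        intro i
        simp only [cen]
        have hp : (0 : ℝ) < 2 ^ k := by positivity
        have h2 : (((Q i : ℕ) : ℝ) + 1 / 2) / 2 ^ (k + 1) - ((((Q i : ℕ) / 2 : ℕ) : ℝ) + 1 / 2) / 2 ^ k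
          = (((Q i : ℕ) : ℝ) - 2 * (((Q i : ℕ) / 2 : ℕ) : ℝ) - 1 / 2) / 2 ^ (k + 1) := by
          field_simp; ring
        rw [h2, abs_div, abs_of_pos (by positivity : (0 : ℝ) < 2 ^ (k + 1))]
        gcongr
        have h3 : ((Q i : ℕ) : ℝ) = 2 * (((Q i : ℕ) / 2 : ℕ) : ℝ) + (((Q i : ℕ) % 2 : ℕ) : ℝ) := by
          exact_mod_cast (Nat.div_add_mod _ _).symm
        rw [h3]
        rcases Nat.mod_two_eq_zero_or_one (Q i : ℕ) with h | h <;> rw [h] <;> norm_num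
      · intro j
        have hF : ∀ k, ∑ Q : Fin d → Fin (2 ^ (k + 1)),
            (if Q = (fun i => ⟨cellIdx (k + 1) (x j i), cellIdx_lt _ _⟩) then (1 : ℝ) else 0) *
              (f (cen (k + 1) (fun i => (Q i : ℕ))) - f (cen k (fun i => (Q i : ℕ) / 2))) =
            f (cen (k + 1) (fun i => cellIdx (k + 1) (x j i))) -
              f (cen k (fun i => cellIdx k (x j i))) := by
          intro k
          simp [cellIdx_half]
        simp only [hF]
        rw [Finset.sum_range_sub (fun k => f (cen k (fun i => cellIdx k (x j i))))]
        have h0 : (fun i => cellIdx 0 (x j i)) = fun _ : Fin d => 0 := by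
          funext i
          have := cellIdx_lt 0 (x j i)
          simpa using this
        rw [h0]
        have : f (x j) - f (cen 0 fun _ => 0) - (f (cen K fun i => cellIdx K (x j i)) -
          f (cen 0 fun _ => 0)) = f (x j) - f (cen K fun i => cellIdx K (x j i)) := by ring
        rw [this]
        refine (lip_abs hf _ _).trans (euclidDist_le _ _ _ (by positivity) ?_)
        intro i
        exact cellIdx_dist K _ (hx j i))
  simpa using this

/-- uniform weights on the dyadic interval of length `2^k` containing `p` -/
def dyW (k p i : ℕ) : ℝ := if i / 2 ^ k = p / 2 ^ k then ((2 : ℝ) ^ k)⁻¹ else 0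

lemma dyW_nonneg (k p i : ℕ) : 0 ≤ dyW k p i := by
  unfold dyW; split_ifs <;> positivity

lemma dyW_le (k p i : ℕ) : dyW k p i ≤ ((2 : ℝ) ^ k)⁻¹ := by
  unfold dyW; split_ifs
  · exact le_rfl
  · positivity

lemma dy_end {K k p : ℕ} (hk : k ≤ K) (hp : p < 2 ^ K) : 2 ^ k * (p / 2 ^ k) + 2 ^ k ≤ 2 ^ K := by
  obtain ⟨m, rfl⟩ := Nat.exists_eq_add_of_le hk
  have h1 : p / 2 ^ k < 2 ^ m := by
    apply Nat.div_lt_of_lt_mul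
    rwa [← pow_add]
  rw [pow_add, ← Nat.mul_succ]
  exact Nat.mul_le_mul_left _ h1

lemma dyW_sum {K k p : ℕ} (hk : k ≤ K) (hp : p < 2 ^ K) (v : ℕ → ℝ) :
    ∑ i : Fin (2 ^ K), dyW k p i * v i =
      ((2 : ℝ) ^ k)⁻¹ * ∑ i ∈ Finset.range (2 ^ k), v (2 ^ k * (p / 2 ^ k) + i) := by
  rw [← Finset.sum_range (fun i => dyW k p i * v i)]
  simp only [dyW, ite_mul, zero_mul]
  rw [← Finset.sum_filter, ← Finset.mul_sum]
  congr 1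
  have hend := dy_end hk hp
  have : Finset.filter (fun i => i / 2 ^ k = p / 2 ^ k) (Finset.range (2 ^ K)) =
      Finset.Ico (2 ^ k * (p / 2 ^ k)) (2 ^ k * (p / 2 ^ k) + 2 ^ k) := by
    ext i
    simp only [Finset.mem_filter, Finset.mem_range, Finset.mem_Ico]
    rw [Nat.div_eq_iff (by positivity)]
    have h1 : 0 < 2 ^ k := by positivity
    rw [mul_comm (p / 2 ^ k)]
    omega
  rw [this, Finset.sum_Ico_eq_sum_range]
  simp

lemma dyW_sum_one {K k p : ℕ} (hk : k ≤ K) (hp : p < 2 ^ K) :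
    ∑ i : Fin (2 ^ K), dyW k p i = 1 := by
  have := dyW_sum hk hp (fun _ => 1)
  simpa using this

lemma tent (M s L : ℕ) (hL : 0 < L) (hs : s + 2 * L ≤ M) :
    ∃ w : Fin M → ℝ, (∀ v : ℕ → ℝ, (2 * L : ℝ)⁻¹ * (∑ i ∈ Finset.range L, v (s + L + i) -
        ∑ i ∈ Finset.range L, v (s + i)) = ∑ i, w i * (v (i + 1) - v i)) ∧
      (∀ i, |w i| ≤ 1 / 2) ∧ ∑ i, |w i| ≤ L / 2 := by
  have hLp : (0 : ℝ) < L := by exact_mod_cast hL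
  let w : Fin M → ℝ := fun m => (2 * L : ℝ)⁻¹ * ∑ i ∈ Finset.range L, ∑ t ∈ Finset.range L,
    if s + i + t = (m : ℕ) then 1 else 0
  have hsw : ∀ g : ℕ → ℝ, ∑ m, w m * g m =
      (2 * L : ℝ)⁻¹ * ∑ i ∈ Finset.range L, ∑ t ∈ Finset.range L, g (s + i + t) := by
    intro g
    simp only [w, mul_assoc]
    rw [← Finset.mul_sum]
    congr 1
    simp only [Finset.sum_mul]
    rw [Finset.sum_comm]
    apply Finset.sum_congr rfl; intro i hi
    rw [Finset.sum_comm]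
    apply Finset.sum_congr rfl; intro t ht
    rw [Finset.mem_range] at hi ht
    rw [Finset.sum_eq_single (⟨s + i + t, by omega⟩ : Fin M)]
    · simp
    · intro b _ hb
      rw [if_neg, zero_mul]
      intro h
      exact hb (Fin.ext h.symm)
    · simp
  have hw0 : ∀ m, 0 ≤ w m := by
    intro m
    apply mul_nonneg (by positivity)
    apply Finset.sum_nonneg; intro i _
    apply Finset.sum_nonneg; intro t _
    split_ifs <;> norm_num
  refine ⟨w, ?_, ?_, ?_⟩
  · intro v
    rw [hsw (fun m => v (m + 1) - v m), ← Finset.sum_sub_distrib]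
    congr 1
    apply Finset.sum_congr rfl; intro i _
    have := Finset.sum_range_sub (fun t => v (s + i + t)) L
    simp only [add_zero] at this
    rw [show s + L + i = s + i + L by ring, ← this]
    rfl
  · intro m
    rw [abs_of_nonneg (hw0 m)]
    have : ∑ i ∈ Finset.range L, ∑ t ∈ Finset.range L, (if s + i + t = (m : ℕ) then (1 : ℝ) else 0)
        ≤ L := by
      calc _ ≤ ∑ i ∈ Finset.range L, (1 : ℝ) := by
            apply Finset.sum_le_sum; intro i _
            have : ∀ t, (s + i + t = (m : ℕ)) → t = m - s - i := by intro t h; omega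
            calc _ ≤ ∑ t ∈ Finset.range L, if t = m - s - i then (1 : ℝ) else 0 := by
                  apply Finset.sum_le_sum; intro t _
                  split_ifs with h1 h2
                  · exact le_rfl
                  · exact absurd (this t h1) h2
                  · norm_num
                  · exact le_rfl
              _ ≤ 1 := by
                  rw [Finset.sum_ite_eq']
                  split_ifs <;> norm_num
        _ = L := by simp
    calc w m ≤ (2 * L : ℝ)⁻¹ * L := mul_le_mul_of_nonneg_left this (by positivity)
      _ = 1 / 2 := by field_simp
  · simp only [abs_of_nonneg (hw0 _)]
    have := hsw (fun _ => 1)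
    simp only [mul_one] at this
    rw [this]
    simp
    apply le_of_eq
    field_simp

lemma dy_step {K k p : ℕ} (hk : k < K) (hp : p < 2 ^ K) :
    ∃ w : Fin (2 ^ K) → ℝ, (∀ v : ℕ → ℝ,
        ∑ i : Fin (2 ^ K), dyW k p i * v i - ∑ i : Fin (2 ^ K), dyW (k + 1) p i * v i =
          ∑ i, w i * (v (i + 1) - v i)) ∧
      (∀ i, |w i| ≤ 1 / 2) ∧ ∑ i, |w i| ≤ 2 ^ k / 2 := by
  have hend := dy_end (k := k + 1) hk hp
  obtain ⟨w, hw1, hw2, hw3⟩ := tent (2 ^ K) (2 ^ (k + 1) * (p / 2 ^ (k + 1))) (2 ^ k)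
    (by positivity) (by rw [pow_succ] at *; omega)
  have hcast : ((2 ^ k : ℕ) : ℝ) = 2 ^ k := by push_cast; rfl
  rw [hcast] at hw3
  rw [hcast] at hw1
  have hdd : p / 2 ^ (k + 1) = p / 2 ^ k / 2 := by rw [pow_succ, Nat.div_div_eq_div_mul]
  have hsplit : ∀ v : ℕ → ℝ, ∑ i : Fin (2 ^ K), dyW (k + 1) p i * v i = (2 * 2 ^ k : ℝ)⁻¹ *
     (∑ i ∈ Finset.range (2 ^ k), v (2 ^ (k + 1) * (p / 2 ^ (k + 1)) + i) +
      ∑ i ∈ Finset.range (2 ^ k), v (2 ^ (k + 1) * (p / 2 ^ (k + 1)) + 2 ^ k + i)) := by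
    intro v
    rw [dyW_sum hk hp, pow_succ (2 : ℝ), mul_comm ((2 : ℝ) ^ k) 2]
    congr 1
    conv_lhs => rw [pow_succ, mul_two, Finset.sum_range_add]
    simp only [add_assoc, pow_succ, mul_two]
  rcases Nat.mod_two_eq_zero_or_one (p / 2 ^ k) with h | h
  · have hs : 2 ^ k * (p / 2 ^ k) = 2 ^ (k + 1) * (p / 2 ^ (k + 1)) := by
      rw [hdd, pow_succ, mul_assoc]; congr 1; omega
    refine ⟨fun i => - w i, ?_, by simpa using hw2, by simpa using hw3⟩
    intro v
    simp only [neg_mul, Finset.sum_neg_distrib]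
    rw [← hw1 v, hsplit, dyW_sum hk.le hp, hs]
    field_simp
    ring
  · have hs : 2 ^ k * (p / 2 ^ k) = 2 ^ (k + 1) * (p / 2 ^ (k + 1)) + 2 ^ k := by
      rw [hdd, pow_succ, mul_assoc, ← Nat.mul_succ]; congr 1; omega
    refine ⟨w, ?_, hw2, hw3⟩
    intro v
    rw [← hw1 v, hsplit, dyW_sum hk.le hp, hs]
    field_simp
    ring

lemma sq_growth {ι : Type*} [Fintype ι] (T t : ι → ℝ) (A B s : ℝ) (hT : ∑ i, |T i| ≤ A)
    (ht : ∑ i, |t i| ≤ B) (hs0 : 0 ≤ s) (hs : ∀ i, |t i| ≤ s) :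
    ∑ i, (T i + t i) ^ 2 ≤ ∑ i, T i ^ 2 + (2 * A + B) * s := by
  have h1 : ∀ i, (T i + t i) ^ 2 ≤ T i ^ 2 + 2 * s * |T i| + s * |t i| := by
    intro i
    have e1 : T i * t i ≤ |T i| * s := by
      calc _ ≤ |T i * t i| := le_abs_self _
        _ = |T i| * |t i| := abs_mul _ _
        _ ≤ _ := by gcongr; exact hs i
    have e2 : t i ^ 2 ≤ s * |t i| := by
      rw [← sq_abs, sq]; gcongr; exact hs i
    nlinarith
  calc _ ≤ ∑ i, (T i ^ 2 + 2 * s * |T i| + s * |t i|) := Finset.sum_le_sum fun i _ => h1 i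
    _ = ∑ i, T i ^ 2 + 2 * s * ∑ i, |T i| + s * ∑ i, |t i| := by
      simp only [Finset.sum_add_distrib, Finset.mul_sum]
    _ ≤ ∑ i, T i ^ 2 + 2 * s * A + s * B := by gcongr
    _ = _ := by ring

lemma l1_growth {ι : Type*} [Fintype ι] (T t : ι → ℝ) (A B : ℝ) (hT : ∑ i, |T i| ≤ A)
    (ht : ∑ i, |t i| ≤ B) : ∑ i, |T i + t i| ≤ A + B := by
  calc _ ≤ ∑ i, (|T i| + |t i|) := Finset.sum_le_sum fun i _ => abs_add_le _ _
    _ = ∑ i, |T i| + ∑ i, |t i| := Finset.sum_add_distrib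
    _ ≤ _ := add_le_add hT ht

lemma flow {K p q : ℕ} (hp : p < 2 ^ K) (hq : q < 2 ^ K) (j : ℕ) (hj : j ≤ K) :
    ∃ H V : Fin (2 ^ K) × Fin (2 ^ K) → ℝ,
      (∀ u : ℕ → ℕ → ℝ, u p q - ∑ i : Fin (2 ^ K), ∑ l : Fin (2 ^ K),
          dyW j p i * (dyW j q l * u i l) =
        ∑ e, H e * (u (e.1 + 1) e.2 - u e.1 e.2) + ∑ e, V e * (u e.1 (e.2 + 1) - u e.1 e.2)) ∧
      (∑ e, |H e| ≤ 2 ^ j / 2) ∧ (∑ e, |V e| ≤ 2 ^ j / 2) ∧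
      (∑ e, H e ^ 2 ≤ 3 / 4 * j) ∧ (∑ e, V e ^ 2 ≤ 3 / 4 * j) := by
  induction j with
  | zero =>
    refine ⟨fun _ => 0, fun _ => 0, ?_, by simp, by simp, by simp, by simp⟩
    intro u
    have h1 : ∀ i : Fin (2 ^ K), ∑ l : Fin (2 ^ K), dyW 0 p i * (dyW 0 q l * u i l) =
        dyW 0 p i * u i q := by
      intro i
      rw [← Finset.mul_sum, dyW_sum (Nat.zero_le _) hq]
      simp
    simp only [h1]
    rw [dyW_sum (Nat.zero_le _) hp (fun i => u i q)]
    simp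
  | succ j ih =>
    obtain ⟨H, V, hid, hH1, hV1, hH2, hV2⟩ := ih (by omega)
    obtain ⟨w, hw, hws, hw1⟩ := dy_step (k := j) (by omega) hp
    obtain ⟨z, hz, hzs, hz1⟩ := dy_step (k := j) (by omega) hq
    have hpos : (0 : ℝ) < 2 ^ j := by positivity
    let h : Fin (2 ^ K) × Fin (2 ^ K) → ℝ := fun e => dyW j q e.2 * w e.1
    let v : Fin (2 ^ K) × Fin (2 ^ K) → ℝ := fun e => dyW (j + 1) p e.1 * z e.2
    have hh1 : ∑ e, |h e| ≤ 2 ^ j / 2 := by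
      simp only [h, abs_mul, abs_of_nonneg (dyW_nonneg _ _ _)]
      rw [Fintype.sum_prod_type]
      simp only [← Finset.sum_mul, dyW_sum_one (show j ≤ K by omega) hq, one_mul]
      exact hw1
    have hv1 : ∑ e, |v e| ≤ 2 ^ j / 2 := by
      simp only [v, abs_mul, abs_of_nonneg (dyW_nonneg _ _ _)]
      rw [Fintype.sum_prod_type]
      simp only [← Finset.mul_sum]
      rw [← Finset.sum_mul, dyW_sum_one hj hp, one_mul]
      exact hz1
    have hhs : ∀ e, |h e| ≤ ((2 : ℝ) ^ j)⁻¹ * (1 / 2) := by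
      intro e
      simp only [h, abs_mul, abs_of_nonneg (dyW_nonneg _ _ _)]
      exact mul_le_mul (dyW_le _ _ _) (hws _) (abs_nonneg _) (by positivity)
    have hvs : ∀ e, |v e| ≤ ((2 : ℝ) ^ j)⁻¹ * (1 / 2) := by
      intro e
      simp only [v, abs_mul, abs_of_nonneg (dyW_nonneg _ _ _)]
      refine mul_le_mul ((dyW_le _ _ _).trans ?_) (hzs _) (abs_nonneg _) (by positivity)
      apply inv_anti₀ hpos
      exact pow_le_pow_right₀ (by norm_num) (by omega)
    have hval : (2 * (2 ^ j / 2) + 2 ^ j / 2) * (((2 : ℝ) ^ j)⁻¹ * (1 / 2)) = 3 / 4 := by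
      field_simp; norm_num
    refine ⟨fun e => H e + h e, fun e => V e + v e, ?_, ?_, ?_, ?_, ?_⟩
    · intro u
      simp only [add_mul, Finset.sum_add_distrib]
      have e1 : ∑ e, h e * (u (e.1 + 1) e.2 - u e.1 e.2) =
          ∑ l : Fin (2 ^ K), dyW j q l * (∑ i : Fin (2 ^ K), dyW j p i * u i l -
            ∑ i : Fin (2 ^ K), dyW (j + 1) p i * u i l) := by
        rw [Fintype.sum_prod_type_right]
        apply Finset.sum_congr rfl; intro l _
        rw [hw (fun i => u i l), Finset.mul_sum]
        apply Finset.sum_congr rfl; intro i _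
        simp only [h]; ring
      have e2 : ∑ e, v e * (u e.1 (e.2 + 1) - u e.1 e.2) =
          ∑ i : Fin (2 ^ K), dyW (j + 1) p i * (∑ l : Fin (2 ^ K), dyW j q l * u i l -
            ∑ l : Fin (2 ^ K), dyW (j + 1) q l * u i l) := by
        rw [Fintype.sum_prod_type]
        apply Finset.sum_congr rfl; intro i _
        rw [hz (fun l => u i l), Finset.mul_sum]
        apply Finset.sum_congr rfl; intro l _
        simp only [v]; ring
      have e3 := hid u
      rw [e1, e2]
      simp only [mul_sub, Finset.sum_sub_distrib, Finset.mul_sum]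
      have e4 : ∀ a : ℕ, ∑ l : Fin (2 ^ K), ∑ i : Fin (2 ^ K), dyW j q l * (dyW a p i * u i l) =
          ∑ i : Fin (2 ^ K), ∑ l : Fin (2 ^ K), dyW a p i * (dyW j q l * u i l) := by
        intro a
        rw [Finset.sum_comm]
        apply Finset.sum_congr rfl; intro i _
        apply Finset.sum_congr rfl; intro l _
        ring
      rw [e4, e4]
      simp only [mul_sub, Finset.sum_sub_distrib] at e3
      linarith
    · refine (l1_growth _ _ _ _ hH1 hh1).trans (le_of_eq ?_)
      rw [pow_succ]; ring
    · refine (l1_growth _ _ _ _ hV1 hv1).trans (le_of_eq ?_)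
      rw [pow_succ]; ring
    · refine (sq_growth H h _ _ _ hH1 hh1 (by positivity) hhs).trans ?_
      rw [hval]; push_cast; linarith
    · refine (sq_growth V v _ _ _ hV1 hv1 (by positivity) hvs).trans ?_
      rw [hval]; push_cast; linarith

lemma grid_bound {N n : ℕ} (hN : 2 ≤ N) (hn1 : 1 ≤ n)
    (x : Fin N → (Fin 2 → ℝ)) (hx : ∀ j i, x j i ∈ Set.Icc (0 : ℝ) 1) (K : ℕ) :
    (∑ τ ∈ subsetsCard N n, W1 (empOfSubset n x τ) (avgMeasure x)) /
          ((subsetsCard N n).card : ℝ≥0∞)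
        ≤ ENNReal.ofReal (2 * (Real.sqrt 2 * (1 / 2 / 2 ^ K)) +
          2 * (1 / 2 ^ K * Real.sqrt (2 ^ K * 2 ^ K * (3 / 4 * K) / n))) := by
  classical
  have hfl := fun j : Fin N => flow (cellIdx_lt K (x j 0)) (cellIdx_lt K (x j 1)) K le_rfl
  choose H V hid hH1 hV1 hH2 hV2 using hfl
  have := core_bound hN hn1 x 2 (fun _ => Fin (2 ^ K) × Fin (2 ^ K))
    (fun k j e => if k = 0 then H j e else V j e) (fun _ => 1 / 2 ^ K) (fun _ => 3 / 4 * K)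
    (Real.sqrt 2 * (1 / 2 / 2 ^ K)) (fun _ => by positivity)
    (by
      intro k j
      by_cases hk : k = 0
      · simpa [hk] using hH2 j
      · simpa [hk] using hV2 j)
    (by
      intro f hf
      let u : ℕ → ℕ → ℝ := fun i l => f (cen K ![i, l])
      refine ⟨∑ i : Fin (2 ^ K), ∑ l : Fin (2 ^ K), dyW K 0 i * (dyW K 0 l * u i l),
        fun k e => if k = 0 then u (e.1 + 1) e.2 - u e.1 e.2 else u e.1 (e.2 + 1) - u e.1 e.2, ?_, ?_⟩
      · intro k e
        have hp : (0 : ℝ) < 2 ^ K := by positivity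
        by_cases hk : k = 0
        · simp only [hk, if_true]
          refine (lip_abs hf _ _).trans ?_
          unfold euclidDist
          rw [Real.sqrt_le_left (by positivity)]
          simp only [Fin.sum_univ_two, cen]
          apply le_of_eq
          simp
          field_simp
          ring
        · simp only [hk, if_false]
          refine (lip_abs hf _ _).trans ?_
          unfold euclidDist
          rw [Real.sqrt_le_left (by positivity)]
          simp only [Fin.sum_univ_two, cen]
          apply le_of_eq
          simp
          field_simp
          ring
      · intro j
        have h0 : ∀ p i : ℕ, p < 2 ^ K → dyW K p i = dyW K 0 i := by
          intro p i hp
          simp [dyW, Nat.div_eq_of_lt hp]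
        have h1 := hid j u
        simp only [h0 _ _ (cellIdx_lt K (x j 0)), h0 _ _ (cellIdx_lt K (x j 1))] at h1
        simp only [Finset.sum_range_succ, Finset.sum_range_zero, if_true, one_ne_zero, if_false,
          zero_add]
        rw [← h1]
        have h2 : ∀ a b c : ℝ, a - b - (c - b) = a - c := by intros; ring
        rw [h2]
        have h3 := euclidDist_le (x j) (cen K ![cellIdx K (x j 0), cellIdx K (x j 1)])
          (1 / 2 / 2 ^ K) (by positivity) (by
            intro i
            fin_cases i
            · simpa [cen] using cellIdx_dist K _ (hx j 0)
            · simpa [cen] using cellIdx_dist K _ (hx j 1))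
        exact (lip_abs hf _ _).trans (by simpa using h3))
  refine this.trans (le_of_eq ?_)
  congr 2
  simp [two_mul]

lemma num_one {n : ℕ} (hn1 : 1 ≤ n) :
    2 * (Real.sqrt (1 : ℕ) * (1 / 2 / 2 ^ (n + 3))) + ∑ k ∈ Finset.range (n + 3),
          Real.sqrt (1 : ℕ) * (1 / 2 / 2 ^ (k + 1)) * Real.sqrt ((2 ^ (k + 1)) ^ 1 / n) ≤
      Real.sqrt (2 / n) := by
  have hnp : (0 : ℝ) < n := by positivity
  have hn1' : (1 : ℝ) ≤ n := by exact_mod_cast hn1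
  have hs : (0 : ℝ) < Real.sqrt n := Real.sqrt_pos.2 hnp
  have hss : Real.sqrt n * Real.sqrt n = n := Real.mul_self_sqrt hnp.le
  have hs1 : 1 ≤ Real.sqrt n := Real.one_le_sqrt.2 hn1'
  set r : ℝ := Real.sqrt 2 with hr
  have hr2 : r * r = 2 := Real.mul_self_sqrt (by norm_num)
  have hr0 : 0 < r := Real.sqrt_pos.2 (by norm_num)
  have hrl : 1.414 ≤ r := Real.le_sqrt_of_sq_le (by norm_num)
  have hru : r ≤ 1.4143 := Real.sqrt_le_iff.2 ⟨by norm_num, by norm_num⟩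
  have hterm : ∀ k : ℕ, Real.sqrt (1 : ℕ) * (1 / 2 / 2 ^ (k + 1)) * Real.sqrt ((2 ^ (k + 1)) ^ 1 / n)
      = (1 / 2 / Real.sqrt n) * (r⁻¹) ^ (k + 1) := by
    intro k
    have h1 : Real.sqrt ((2 : ℝ) ^ (k + 1)) = r ^ (k + 1) := by
      rw [Real.sqrt_eq_iff_mul_self_eq (by positivity) (by positivity), ← mul_pow, hr2]
    have h2 : (2 : ℝ) ^ (k + 1) = r ^ (k + 1) * r ^ (k + 1) := by rw [← mul_pow, hr2]
    rw [pow_one, Real.sqrt_div (by positivity), h1, h2]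
    simp
    field_simp
  have hgeo : ∀ m : ℕ, ∑ k ∈ Finset.range m, (r⁻¹) ^ (k + 1) = (r + 1) * (1 - (r⁻¹) ^ m) := by
    intro m
    induction m with
    | zero => simp
    | succ m ih =>
      rw [Finset.sum_range_succ, ih, pow_succ]
      field_simp
      linear_combination (-(r⁻¹ ^ m)) * hr2
  simp only [hterm]
  rw [← Finset.mul_sum, hgeo, Real.sqrt_div (by norm_num), ← hr]
  have h8 : (8 : ℝ) * n ≤ 2 ^ (n + 3) := by
    have : n < 2 ^ n := Nat.lt_two_pow_self
    have : (n : ℝ) ≤ 2 ^ n := by exact_mod_cast this.le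
    rw [pow_add]; linarith
  have hA : 2 * (Real.sqrt (1 : ℕ) * (1 / 2 / 2 ^ (n + 3))) ≤ (1 / 8) / Real.sqrt n := by
    have : 2 * (Real.sqrt (1 : ℕ) * (1 / 2 / 2 ^ (n + 3))) = 1 / 2 ^ (n + 3) := by simp; field_simp
    rw [this, div_le_div_iff₀ (by positivity) hs]
    nlinarith
  have hB : (r + 1) * (1 - (r⁻¹) ^ (n + 3)) ≤ r + 1 := by
    have : 0 ≤ (r⁻¹) ^ (n + 3) := by positivity
    nlinarith
  calc _ ≤ (1 / 8) / Real.sqrt n + (1 / 2 / Real.sqrt n) * (r + 1) := by gcongr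
    _ = (1 / 8 + (r + 1) / 2) / Real.sqrt n := by ring
    _ ≤ r / Real.sqrt n := by gcongr; linarith

lemma num_two {n : ℕ} (hn1 : 1 ≤ n) :
    2 * (Real.sqrt 2 * (1 / 2 / 2 ^ (Nat.log 2 n + 1))) + 2 * (1 / 2 ^ (Nat.log 2 n + 1) *
      Real.sqrt (2 ^ (Nat.log 2 n + 1) * 2 ^ (Nat.log 2 n + 1) *
        (3 / 4 * (Nat.log 2 n + 1 : ℕ)) / n)) ≤
      8 * Real.sqrt ((1 + Real.log (2 * n)) / n) := by
  have hnp : (0 : ℝ) < n := by positivity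
  have hn1' : (1 : ℝ) ≤ n := by exact_mod_cast hn1
  set K := Nat.log 2 n + 1 with hK
  have hpk : (n : ℝ) ≤ 2 ^ K := by exact_mod_cast (Nat.lt_pow_succ_log_self (by norm_num) n).le
  have hp : (0 : ℝ) < 2 ^ K := by positivity
  have hlogn : 0 ≤ Real.log n := Real.log_nonneg hn1'
  have hl2 : (1 : ℝ) / 2 < Real.log 2 := by linarith [Real.log_two_gt_d9]
  have hKl : (K : ℝ) ≤ 1 + 2 * Real.log n := by
    have h1 : (2 : ℝ) ^ (Nat.log 2 n) ≤ n := by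
      exact_mod_cast Nat.pow_log_le_self 2 (by omega)
    have h2 := Real.log_le_log (by positivity) h1
    rw [Real.log_pow] at h2
    have h3 : (0 : ℝ) ≤ (Nat.log 2 n : ℝ) := Nat.cast_nonneg _
    rw [hK]; push_cast
    nlinarith
  have hlog : Real.log (2 * n) = Real.log 2 + Real.log n := Real.log_mul (by norm_num) hnp.ne'
  set X := (1 + Real.log (2 * n)) / n with hX
  have hX0 : 0 ≤ X := by rw [hX, hlog]; positivity
  have hA : 1 / 2 ^ K ≤ Real.sqrt X := by
    apply Real.le_sqrt_of_sq_le
    rw [hX, div_pow, div_le_div_iff₀ (by positivity) hnp, hlog]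
    have : (n : ℝ) ≤ (2 ^ K) ^ 2 := by nlinarith
    nlinarith [sq_nonneg ((2 : ℝ) ^ K)]
  have hB : 1 / 2 ^ K * Real.sqrt (2 ^ K * 2 ^ K * (3 / 4 * K) / n) ≤ 3 / 2 * Real.sqrt X := by
    have : Real.sqrt (2 ^ K * 2 ^ K * (3 / 4 * K) / n) = 2 ^ K * Real.sqrt (3 / 4 * K / n) := by
      rw [mul_div_assoc, Real.sqrt_mul (by positivity), Real.sqrt_mul_self hp.le]
    rw [this, ← mul_assoc, one_div_mul_cancel hp.ne', one_mul]
    have h2 : Real.sqrt ((3 / 2) ^ 2 * X) = 3 / 2 * Real.sqrt X := by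
      rw [Real.sqrt_mul (by norm_num), Real.sqrt_sq (by norm_num)]
    rw [← h2]
    apply Real.sqrt_le_sqrt
    rw [hX, mul_div_assoc', hlog]
    apply div_le_div_of_nonneg_right _ hnp.le
    linarith
  have hr : Real.sqrt 2 ≤ 2 := Real.sqrt_le_iff.2 ⟨by norm_num, by norm_num⟩
  have hC : 2 * (Real.sqrt 2 * (1 / 2 / 2 ^ K)) ≤ 2 * Real.sqrt X := by
    have : 2 * (Real.sqrt 2 * (1 / 2 / 2 ^ K)) = Real.sqrt 2 * (1 / 2 ^ K) := by ring
    rw [this]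
    exact mul_le_mul hr hA (by positivity) (by norm_num)
  have := Real.sqrt_nonneg X
  linarith

lemma num_three {n d : ℕ} (hn1 : 1 ≤ n) (hd : 3 ≤ d) :
    2 * (Real.sqrt d * (1 / 2 / 2 ^ (Nat.log (2 ^ d) n))) + ∑ k ∈ Finset.range (Nat.log (2 ^ d) n),
          Real.sqrt d * (1 / 2 / 2 ^ (k + 1)) * Real.sqrt ((2 ^ (k + 1)) ^ d / n) ≤
      13 * Real.sqrt d / (n : ℝ) ^ (1 / d : ℝ) := by
  have hnp : (0 : ℝ) < n := by positivity
  set K := Nat.log (2 ^ d) n with hK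
  have hdpos : (0 : ℝ) < d := by exact_mod_cast (by omega : 0 < d)
  have hb : 1 < 2 ^ d := Nat.one_lt_two_pow (by omega)
  have h1 : ((2 : ℝ) ^ d) ^ K ≤ n := by exact_mod_cast Nat.pow_log_le_self (2 ^ d) (by omega : n ≠ 0)
  have h2 : (n : ℝ) ≤ ((2 : ℝ) ^ d) ^ (K + 1) := by
    exact_mod_cast (Nat.lt_pow_succ_log_self hb n).le
  have hroot : (n : ℝ) ^ (1 / d : ℝ) ≤ 2 ^ (K + 1) := by
    calc (n : ℝ) ^ (1 / d : ℝ) ≤ (((2 : ℝ) ^ d) ^ (K + 1)) ^ (1 / d : ℝ) :=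
          Real.rpow_le_rpow hnp.le h2 (by positivity)
      _ = 2 ^ (K + 1) := by
          rw [← pow_mul, mul_comm, pow_mul, one_div]
          exact Real.pow_rpow_inv_natCast (by positivity) (by omega)
  have hrpos : 0 < (n : ℝ) ^ (1 / d : ℝ) := Real.rpow_pos_of_pos hnp _
  set q : ℝ := Real.sqrt (2 ^ d) with hq
  have hq2 : q * q = 2 ^ d := Real.mul_self_sqrt (by positivity)
  set s : ℝ := q / 2 with hs
  have hs43 : 4 / 3 ≤ s := by
    have : (8 / 3 : ℝ) ≤ q := by
      apply Real.le_sqrt_of_sq_le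
      calc (8 / 3 : ℝ) ^ 2 ≤ 2 ^ 3 := by norm_num
        _ ≤ 2 ^ d := pow_le_pow_right₀ (by norm_num) hd
    rw [hs]; linarith
  have hs0 : 0 < s := by linarith
  have hq0 : 0 < q := by rw [hs] at hs0; linarith
  have hsn : 0 < Real.sqrt n := Real.sqrt_pos.2 hnp
  have hterm : ∀ k : ℕ, Real.sqrt d * (1 / 2 / 2 ^ (k + 1)) * Real.sqrt ((2 ^ (k + 1)) ^ d / n) =
      (Real.sqrt d / 2 / Real.sqrt n) * s ^ (k + 1) := by
    intro k
    have e1 : Real.sqrt (((2 : ℝ) ^ (k + 1)) ^ d) = q ^ (k + 1) := by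
      rw [Real.sqrt_eq_iff_mul_self_eq (by positivity) (by positivity), ← mul_pow, hq2,
        ← pow_mul, ← pow_mul, mul_comm]
    rw [Real.sqrt_div (by positivity), e1, hs, div_pow]
    field_simp
  have hgeo : ∀ m : ℕ, ∑ k ∈ Finset.range m, s ^ (k + 1) ≤ 4 * s ^ m := by
    intro m
    induction m with
    | zero => simp
    | succ m ih =>
      rw [Finset.sum_range_succ]
      have : 0 < s ^ m := by positivity
      rw [pow_succ]
      nlinarith
  have hsK : s ^ K ≤ Real.sqrt n / 2 ^ K := by
    rw [hs, div_pow]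
    gcongr
    apply Real.le_sqrt_of_sq_le
    rw [← pow_mul, mul_comm, pow_mul, sq, hq2]
    exact h1
  simp only [hterm]
  rw [← Finset.mul_sum]
  have hd0 : 0 ≤ Real.sqrt d := Real.sqrt_nonneg _
  calc _ ≤ 2 * (Real.sqrt d * (1 / 2 / 2 ^ K)) +
        (Real.sqrt d / 2 / Real.sqrt n) * (4 * (Real.sqrt n / 2 ^ K)) := by
        gcongr
        exact (hgeo K).trans (by gcongr)
    _ = 6 * Real.sqrt d / 2 ^ (K + 1) := by rw [pow_succ]; field_simp; norm_num
    _ ≤ 13 * Real.sqrt d / (n : ℝ) ^ (1 / d : ℝ) := by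
        gcongr
        norm_num

/-- Corollary 5: concentration of the empirical measures `μ_τ` over uniformly
random `n`-element subsets `τ` around the average measure `μ`. -/
theorem expected_W1_empOfSubset {d N n : ℕ} (hN : 2 ≤ N) (hn1 : 1 ≤ n) (hnN : n ≤ N)
    (x : Fin N → (Fin d → ℝ)) (hx : ∀ j i, x j i ∈ Set.Icc (0 : ℝ) 1) :
    (d = 1 →
      (∑ τ ∈ subsetsCard N n, W1 (empOfSubset n x τ) (avgMeasure x)) /
          ((subsetsCard N n).card : ℝ≥0∞)
        ≤ ENNReal.ofReal (Real.sqrt (2 / n))) ∧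
    (d = 2 →
      (∑ τ ∈ subsetsCard N n, W1 (empOfSubset n x τ) (avgMeasure x)) /
          ((subsetsCard N n).card : ℝ≥0∞)
        ≤ ENNReal.ofReal (8 * Real.sqrt ((1 + Real.log (2 * n)) / n))) ∧
    (3 ≤ d →
      (∑ τ ∈ subsetsCard N n, W1 (empOfSubset n x τ) (avgMeasure x)) /
          ((subsetsCard N n).card : ℝ≥0∞)
        ≤ ENNReal.ofReal (13 * Real.sqrt d / (n : ℝ) ^ (1 / d : ℝ))) := by
  refine ⟨?_, ?_, ?_⟩
  · intro hd
    subst hd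
    refine (dyadic_bound hN hn1 x hx (n + 3)).trans (ENNReal.ofReal_le_ofReal ?_)
    exact num_one hn1
  · intro hd
    subst hd
    refine (grid_bound hN hn1 x hx (Nat.log 2 n + 1)).trans (ENNReal.ofReal_le_ofReal ?_)
    exact num_two hn1
  · intro hd
    refine (dyadic_bound hN hn1 x hx (Nat.log (2 ^ d) n)).trans (ENNReal.ofReal_le_ofReal ?_)
    exact num_three hn1 hd
end
end

section
/- (Lower bound, d ≥ 3.) Let d ≥ 3, let X_1,…,X_n be independent random variables with the uniform distribution μ on [0,1]^d, and let μ_n = (1/n)Σ_{k=1}^n δ_{X_k}. There exists a constant c > 0 depending only on d such that for all n ≥ 1, E(W₁(μ_n, μ)) ≥ c/n^{1/d}. -/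
open MeasureTheory ProbabilityTheory Real ENNReal

noncomputable section

/-- The uniform (Lebesgue) probability distribution on the cube `[0,1]^d`. -/
def uniformCube (d : ℕ) : Measure (Fin d → ℝ) :=
  volume.restrict {x | ∀ i, x i ∈ Set.Icc (0 : ℝ) 1}

/-- The empirical measure `(1/n) Σ_k δ_{X_k(ω)}`. -/
def empMeasure {d n : ℕ} {Ω : Type*} [MeasurableSpace Ω]
    (X : Fin n → Ω → (Fin d → ℝ)) (ω : Ω) : Measure (Fin d → ℝ) :=
  (n : ℝ≥0∞)⁻¹ • ∑ k, Measure.dirac (X k ω)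

theorem euclid_ge_dist {d : ℕ} (x y : Fin d → ℝ) : dist x y ≤ euclidDist x y := by
  unfold euclidDist
  refine (dist_pi_le_iff (Real.sqrt_nonneg _)).2 fun i => ?_
  rw [Real.dist_eq]
  apply Real.abs_le_sqrt
  exact Finset.single_le_sum (f := fun i => (x i - y i) ^ 2) (fun i _ => sq_nonneg _)
    (Finset.mem_univ i)

theorem uniformCube_univ (d : ℕ) : uniformCube d Set.univ = 1 := by
  unfold uniformCube
  rw [Measure.restrict_apply_univ]
  have : {x : Fin d → ℝ | ∀ i, x i ∈ Set.Icc (0 : ℝ) 1} = Set.Icc 0 1 := by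
    ext x
    simp only [Set.mem_setOf_eq, Set.mem_Icc, Pi.le_def]
    exact forall_and
  rw [this, Real.volume_Icc_pi]
  simp

theorem W1_ge {d n : ℕ} {Ω : Type} [MeasurableSpace Ω] (X : Fin n → Ω → (Fin d → ℝ)) (ω : Ω)
    (r : ℝ) (hr : 0 < r) (h : (n : ℝ) * (2 * r) ^ d = 1 / 2) :
    ENNReal.ofReal (r / 2) ≤ W1 (empMeasure X ω) (uniformCube d) := by
  unfold W1 transportCost
  refine le_iInf fun γ => le_iInf fun hγ => ?_
  obtain ⟨h1, h2⟩ := hγ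
  set U : Set (Fin d → ℝ) := ⋃ k, Metric.ball (X k ω) r with hU
  have hUm : MeasurableSet U := MeasurableSet.iUnion fun k => measurableSet_ball
  set F : Set (Fin d → ℝ) := Set.range fun k => X k ω with hF
  have hFm : MeasurableSet F := (Set.finite_range _).measurableSet
  have hA : ∀ᵐ p ∂γ, p.1 ∈ F := by
    have : γ (Prod.fst ⁻¹' Fᶜ) = 0 := by
      rw [← Measure.map_apply measurable_fst hFm.compl, h1]
      unfold empMeasure
      rw [Measure.smul_apply, Measure.finsetSum_apply]
      simp [Measure.dirac_apply' _ hFm.compl, hF]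
    exact this
  have hUle : uniformCube d U ≤ ENNReal.ofReal (1 / 2) := by
    calc uniformCube d U ≤ volume U := Measure.restrict_apply_le _ _
      _ ≤ ∑ k : Fin n, volume (Metric.ball (X k ω) r) := measure_iUnion_fintype_le _ _
      _ = ENNReal.ofReal (1 / 2) := by
        simp only [Real.volume_pi_ball _ hr, Finset.sum_const, Finset.card_univ,
          Fintype.card_fin, nsmul_eq_mul]
        rw [← h, ENNReal.ofReal_mul (by positivity), ENNReal.ofReal_natCast]
  have hB : ENNReal.ofReal (1 / 2) ≤ γ (Prod.snd ⁻¹' Uᶜ) := by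
    rw [← Measure.map_apply measurable_snd hUm.compl, h2,
      measure_compl hUm (ne_top_of_le_ne_top ENNReal.ofReal_ne_top hUle), uniformCube_univ]
    calc ENNReal.ofReal (1 / 2) = 1 - ENNReal.ofReal (1 / 2) := by
          rw [← ENNReal.ofReal_one, ← ENNReal.ofReal_sub _ (by norm_num)]; norm_num
      _ ≤ _ := tsub_le_tsub_left hUle _
  calc ENNReal.ofReal (r / 2) = ENNReal.ofReal r * ENNReal.ofReal (1 / 2) := by
        rw [← ENNReal.ofReal_mul hr.le]; congr 1; ring
    _ ≤ ENNReal.ofReal r * γ (Prod.snd ⁻¹' Uᶜ) := by gcongr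
    _ = ∫⁻ p, (Prod.snd ⁻¹' Uᶜ).indicator (fun _ => ENNReal.ofReal r) p ∂γ := by
        rw [lintegral_indicator_const (measurable_snd hUm.compl)]
    _ ≤ _ := by
        apply lintegral_mono_ae
        filter_upwards [hA] with p hp
        by_cases hq : p ∈ (Prod.snd ⁻¹' Uᶜ : Set ((Fin d → ℝ) × (Fin d → ℝ)))
        · rw [Set.indicator_of_mem hq]
          apply ENNReal.ofReal_le_ofReal
          refine le_trans ?_ (euclid_ge_dist _ _)
          obtain ⟨k, hk⟩ := hp
          by_contra hlt
          push Not at hlt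
          refine hq (Set.mem_iUnion.2 ⟨k, ?_⟩)
          rw [Metric.mem_ball, dist_comm]
          simpa [← hk] using hlt
        · rw [Set.indicator_of_notMem hq]
          exact zero_le

/-- Lower bound for `d ≥ 3`: for independent uniform samples on `[0,1]^d`,
`E(W₁(μ_n, μ)) ≥ c/n^{1/d}` with `c > 0` depending only on `d`. -/
theorem W1_lower_bound_high_dim (d : ℕ) (hd : 3 ≤ d) :
    ∃ c : ℝ, 0 < c ∧
      ∀ (n : ℕ), 1 ≤ n →
      ∀ (Ω : Type) (_ : MeasurableSpace Ω) (P : Measure Ω), IsProbabilityMeasure P →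
      ∀ (X : Fin n → Ω → (Fin d → ℝ)),
        iIndepFun X P →
        (∀ k, P.map (X k) = uniformCube d) →
        ENNReal.ofReal (c / (n : ℝ) ^ (1 / d : ℝ))
          ≤ ∫⁻ ω, W1 (empMeasure X ω) (uniformCube d) ∂P := by
  refine ⟨(1 / 2 : ℝ) ^ (1 / d : ℝ) / 4, by positivity, ?_⟩
  intro n hn Ω _ P hP X _ _
  have hn0 : (0 : ℝ) < n := by exact_mod_cast hn
  have hd0 : d ≠ 0 := by omega
  set t : ℝ := (1 / 2 : ℝ) ^ (1 / d : ℝ) / (n : ℝ) ^ (1 / d : ℝ) with ht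
  have htpos : 0 < t := by positivity
  have htd : t ^ d = 1 / 2 / n := by
    rw [ht, div_pow, ← Real.rpow_natCast, ← Real.rpow_natCast, ← Real.rpow_mul (by norm_num),
      ← Real.rpow_mul hn0.le, one_div_mul_cancel (by exact_mod_cast hd0)]
    simp
  have key : ∀ ω, ENNReal.ofReal ((1 / 2 : ℝ) ^ (1 / d : ℝ) / 4 / (n : ℝ) ^ (1 / d : ℝ)) ≤
      W1 (empMeasure X ω) (uniformCube d) := by
    intro ω
    have := W1_ge X ω (t / 2) (by positivity) (by
      rw [mul_div_cancel₀ _ (two_ne_zero), htd]; field_simp)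
    convert this using 2
    rw [ht]; ring
  calc _ = ∫⁻ _ω, ENNReal.ofReal ((1 / 2 : ℝ) ^ (1 / d : ℝ) / 4 / (n : ℝ) ^ (1 / d : ℝ)) ∂P := by
        simp
    _ ≤ _ := lintegral_mono key
end
end
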